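/- For all x, y ∈ (0,1), one has 1 + j(y)·x/ln(1-x) + k(y)·(1-x)/ln(x) ≥ 0, and equality holds if and only if x = y. -/

import Mathlib

/-!
For `x ∈ (0,1)` one has `h(x) = -∫ s in 0..1, x ^ s`, which is strictly convex and decreasing in `x`
because each `x ↦ x ^ s` with `0 < s < 1` is strictly concave and increasing. Its mirror image
`g(x) = h(1 - x)` is strictly convex and increasing, and both functions are negative. So `W(y) > 0`
and `j(y), k(y) > 0`, which makes `x ↦ j(y) g(x) + k(y) h(x)` strictly convex. By the choice of
`j(y)` and `k(y)`, its value at `y` is `-1` and `y` is a critical point, hence the unique minimizer.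
-/

noncomputable def gFun (y : ℝ) : ℝ := y / Real.log (1 - y)

noncomputable def hFun (y : ℝ) : ℝ := (1 - y) / Real.log y

/-- Wronskian of `g` and `h`. -/
noncomputable def WFun (y : ℝ) : ℝ := gFun y * deriv hFun y - deriv gFun y * hFun y

noncomputable def jFun (y : ℝ) : ℝ := -deriv hFun y / WFun y

noncomputable def kFun (y : ℝ) : ℝ := deriv gFun y / WFun y

open Set

section StrictConvexity

lemma strictConcaveOn_intervalIntegral {E : Type*} [AddCommMonoid E] [Module ℝ E] {S : Set E}
    {f : ℝ → E → ℝ} {a b : ℝ} (hab : a < b)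
    (hcont : ∀ x ∈ S, ContinuousOn (fun s ↦ f s x) (Icc a b))
    (hconc : ∀ s ∈ Ioc a b, ConcaveOn ℝ S (f s))
    (hstrict : ∃ s ∈ Icc a b, StrictConcaveOn ℝ S (f s)) :
    StrictConcaveOn ℝ S fun x ↦ ∫ s in a..b, f s x := by
  obtain ⟨c, hc, hfc⟩ := hstrict
  refine ⟨hfc.1, fun x hx y hy hxy p q hp hq hpq ↦ ?_⟩
  have hcx : ContinuousOn (fun s ↦ p • f s x) (Icc a b) := (hcont x hx).const_smul p
  have hcy : ContinuousOn (fun s ↦ q • f s y) (Icc a b) := (hcont y hy).const_smul q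
  calc p • (∫ s in a..b, f s x) + q • ∫ s in a..b, f s y
      = ∫ s in a..b, (p • f s x + q • f s y) := by
        rw [intervalIntegral.integral_add (hcx.intervalIntegrable_of_Icc hab.le)
          (hcy.intervalIntegrable_of_Icc hab.le), intervalIntegral.integral_smul,
          intervalIntegral.integral_smul]
    _ < ∫ s in a..b, f s (p • x + q • y) :=
        intervalIntegral.integral_lt_integral_of_continuousOn_of_le_of_exists_lt hab
          (hcx.add hcy) (hcont _ (hfc.1 hx hy hp.le hq.le hpq))
          (fun s hs ↦ (hconc s hs).2 hx hy hp.le hq.le hpq) ⟨c, hc, hfc.2 hx hy hxy hp hq hpq⟩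

lemma strictConvexOn_comp_const_sub {E : Type*} [AddCommGroup E] [Module ℝ E] {S : Set E}
    {f : E → ℝ} (hf : StrictConvexOn ℝ S f) (c : E) :
    StrictConvexOn ℝ ((c - ·) ⁻¹' S) fun x ↦ f (c - x) := by
  have hcomb {x y : E} {p q : ℝ} (hpq : p + q = 1) :
      c - (p • x + q • y) = p • (c - x) + q • (c - y) := by
    rw [smul_sub, smul_sub, sub_add_sub_comm, ← add_smul, hpq, one_smul]
  refine ⟨fun x hx y hy p q hp hq hpq ↦ ?_, fun x hx y hy hxy p q hp hq hpq ↦ ?_⟩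
  · rw [mem_preimage, hcomb hpq]
    exact hf.1 hx hy hp hq hpq
  · simp only [hcomb hpq]
    exact hf.2 hx hy (sub_right_injective.ne hxy) hp hq hpq

variable {S : Set ℝ} {f g : ℝ → ℝ} {f' g' x y : ℝ}

lemma tangent_lt_of_strictConvexOn (hf : StrictConvexOn ℝ S f) (hx : x ∈ S) (hy : y ∈ S)
    (hxy : x ≠ y) (hf' : HasDerivAt f f' y) : f y + f' * (x - y) < f x := by
  rcases hxy.lt_or_gt with hlt | hlt
  · have hslope := hf.slope_lt_of_hasDerivAt hx hy hlt hf'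
    rw [slope_def_field, div_lt_iff₀ (sub_pos.2 hlt)] at hslope
    linarith
  · have hslope := hf.lt_slope_of_hasDerivAt hy hx hlt hf'
    rw [slope_def_field, lt_div_iff₀ (sub_pos.2 hlt)] at hslope
    linarith

lemma mul_add_mul_lt_of_strictConvexOn_of_critical {a b : ℝ} (ha : 0 < a) (hb : 0 < b)
    (hf : StrictConvexOn ℝ S f) (hg : StrictConvexOn ℝ S g) (hx : x ∈ S) (hy : y ∈ S)
    (hxy : x ≠ y) (hf' : HasDerivAt f f' y) (hg' : HasDerivAt g g' y)
    (hcrit : a * f' + b * g' = 0) : a * f y + b * g y < a * f x + b * g x :=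
  calc a * f y + b * g y
      = a * (f y + f' * (x - y)) + b * (g y + g' * (x - y)) := by
        linear_combination (y - x) * hcrit
    _ < a * f x + b * g x := by
        gcongr
        · exact tangent_lt_of_strictConvexOn hf hx hy hxy hf'
        · exact tangent_lt_of_strictConvexOn hg hx hy hxy hg'

end StrictConvexity

section IntegralRpow

variable {x : ℝ}

lemma continuous_rpow_exponent (hx : 0 < x) : Continuous fun s : ℝ ↦ x ^ s :=
  continuous_const.rpow continuous_id fun _ ↦ Or.inl hx.ne'

lemma integral_rpow_exponent (hx : 0 < x) (hx1 : x ≠ 1) (a b : ℝ) :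
    ∫ s in a..b, x ^ s = (x ^ b - x ^ a) / Real.log x := by
  have hlog : Real.log x ≠ 0 := Real.log_ne_zero_of_pos_of_ne_one hx hx1
  have hderiv (s : ℝ) : HasDerivAt (fun s ↦ x ^ s / Real.log x) (x ^ s) s := by
    simpa [hlog] using ((hasDerivAt_id s).const_rpow hx).div_const (Real.log x)
  rw [intervalIntegral.integral_eq_sub_of_hasDerivAt (fun s _ ↦ hderiv s)
    ((continuous_rpow_exponent hx).intervalIntegrable a b), sub_div]

lemma strictConcaveOn_integral_rpow :
    StrictConcaveOn ℝ (Ioi 0) fun x : ℝ ↦ ∫ s in (0 : ℝ)..1, x ^ s := by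
  refine strictConcaveOn_intervalIntegral one_pos
    (fun x hx ↦ (continuous_rpow_exponent hx).continuousOn) (fun s hs ↦ ?_) ⟨1 / 2, ?_, ?_⟩
  · exact (Real.concaveOn_rpow hs.1.le hs.2).subset Ioi_subset_Ici_self (convex_Ioi 0)
  · norm_num
  · exact (Real.strictConcaveOn_rpow (by norm_num) (by norm_num)).subset Ioi_subset_Ici_self
      (convex_Ioi 0)

lemma monotoneOn_integral_rpow :
    MonotoneOn (fun x : ℝ ↦ ∫ s in (0 : ℝ)..1, x ^ s) (Ioi 0) := fun _ hx _ hy hxy ↦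
  intervalIntegral.integral_mono_on zero_le_one
    ((continuous_rpow_exponent hx).intervalIntegrable 0 1)
    ((continuous_rpow_exponent hy).intervalIntegrable 0 1)
    fun _ hs ↦ Real.rpow_le_rpow (le_of_lt hx) hxy hs.1

end IntegralRpow

section

variable {y : ℝ}

lemma hFun_eq_neg_integral (hy : 0 < y) (hy1 : y ≠ 1) :
    hFun y = -∫ s in (0 : ℝ)..1, y ^ s := by
  rw [integral_rpow_exponent hy hy1, Real.rpow_one, Real.rpow_zero, hFun, ← neg_div, neg_sub]

lemma strictConvexOn_hFun : StrictConvexOn ℝ (Ioo 0 1) hFun :=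
  (strictConcaveOn_integral_rpow.neg.subset Ioo_subset_Ioi_self (convex_Ioo 0 1)).congr
    fun _ hy ↦ (hFun_eq_neg_integral hy.1 hy.2.ne).symm

lemma antitoneOn_hFun : AntitoneOn hFun (Ioo 0 1) :=
  (monotoneOn_integral_rpow.neg.mono Ioo_subset_Ioi_self).congr
    fun _ hy ↦ (hFun_eq_neg_integral hy.1 hy.2.ne).symm

lemma hFun_neg (hy : y ∈ Ioo 0 1) : hFun y < 0 :=
  div_neg_of_pos_of_neg (sub_pos.2 hy.2) (Real.log_neg hy.1 hy.2)

lemma differentiableAt_hFun (hy : 0 < y) (hy1 : y ≠ 1) : DifferentiableAt ℝ hFun y :=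
  (differentiableAt_id.const_sub 1).div (Real.differentiableAt_log hy.ne')
    (Real.log_ne_zero_of_pos_of_ne_one hy hy1)

lemma deriv_hFun_neg (hy : y ∈ Ioo 0 1) : deriv hFun y < 0 := by
  obtain ⟨z, hyz, hz1⟩ := exists_between hy.2
  have hz : z ∈ Ioo (0 : ℝ) 1 := ⟨hy.1.trans hyz, hz1⟩
  calc deriv hFun y < slope hFun y z :=
        strictConvexOn_hFun.deriv_lt_slope hy hz hyz (differentiableAt_hFun hy.1 hy.2.ne)
    _ ≤ 0 := by
        rw [slope_def_field]
        exact div_nonpos_of_nonpos_of_nonneg (sub_nonpos.2 (antitoneOn_hFun hy hz hyz.le))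
          (sub_nonneg.2 hyz.le)

lemma gFun_eq_hFun_one_sub (y : ℝ) : gFun y = hFun (1 - y) := by
  rw [gFun, hFun, sub_sub_cancel]

lemma strictConvexOn_gFun : StrictConvexOn ℝ (Ioo 0 1) gFun := by
  simpa [← gFun_eq_hFun_one_sub] using strictConvexOn_comp_const_sub strictConvexOn_hFun 1

lemma gFun_neg (hy : y ∈ Ioo 0 1) : gFun y < 0 :=
  gFun_eq_hFun_one_sub y ▸ hFun_neg (Ioo.one_sub_mem hy)

lemma differentiableAt_gFun (hy0 : y ≠ 0) (hy1 : y < 1) : DifferentiableAt ℝ gFun y := by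
  rw [funext gFun_eq_hFun_one_sub]
  exact (differentiableAt_hFun (sub_pos.2 hy1) (by simpa using hy0)).comp y (by fun_prop)

lemma deriv_gFun_pos (hy : y ∈ Ioo 0 1) : 0 < deriv gFun y := by
  rw [funext gFun_eq_hFun_one_sub, deriv_comp_const_sub]
  exact neg_pos.2 (deriv_hFun_neg (Ioo.one_sub_mem hy))

lemma WFun_pos (hy : y ∈ Ioo 0 1) : 0 < WFun y :=
  sub_pos.2 <| (mul_neg_of_pos_of_neg (deriv_gFun_pos hy) (hFun_neg hy)).trans <|
    mul_pos_of_neg_of_neg (gFun_neg hy) (deriv_hFun_neg hy)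

lemma jFun_pos (hy : y ∈ Ioo 0 1) : 0 < jFun y :=
  div_pos (neg_pos.2 (deriv_hFun_neg hy)) (WFun_pos hy)

lemma kFun_pos (hy : y ∈ Ioo 0 1) : 0 < kFun y :=
  div_pos (deriv_gFun_pos hy) (WFun_pos hy)

lemma jFun_mul_gFun_add_kFun_mul_hFun (hW : WFun y ≠ 0) :
    jFun y * gFun y + kFun y * hFun y = -1 := by
  rw [jFun, kFun]
  field_simp
  rw [WFun]
  ring

lemma jFun_mul_deriv_gFun_add_kFun_mul_deriv_hFun (y : ℝ) :
    jFun y * deriv gFun y + kFun y * deriv hFun y = 0 := by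
  rw [jFun, kFun]
  ring

end

/-- For all `x, y ∈ (0,1)`, `1 + j(y)·x/ln(1-x) + k(y)·(1-x)/ln(x) ≥ 0`,
with equality iff `x = y`. -/
theorem stmt_12 (x y : ℝ) (hx : x ∈ Set.Ioo (0 : ℝ) 1) (hy : y ∈ Set.Ioo (0 : ℝ) 1) :
    1 + jFun y * x / Real.log (1 - x) + kFun y * (1 - x) / Real.log x ≥ 0 ∧
    (1 + jFun y * x / Real.log (1 - x) + kFun y * (1 - x) / Real.log x = 0 ↔ x = y) := by
  rw [mul_div_assoc, mul_div_assoc, ← gFun, ← hFun]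
  have hval := jFun_mul_gFun_add_kFun_mul_hFun (WFun_pos hy).ne'
  rcases eq_or_ne x y with rfl | hxy
  · have hzero : 1 + jFun x * gFun x + kFun x * hFun x = 0 := by linarith
    exact ⟨hzero.ge, iff_of_true hzero rfl⟩
  · have hmin := mul_add_mul_lt_of_strictConvexOn_of_critical (jFun_pos hy) (kFun_pos hy)
      strictConvexOn_gFun strictConvexOn_hFun hx hy hxy
      (differentiableAt_gFun hy.1.ne' hy.2).hasDerivAt
      (differentiableAt_hFun hy.1 hy.2.ne).hasDerivAt
      (jFun_mul_deriv_gFun_add_kFun_mul_deriv_hFun y)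
    have hpos : 0 < 1 + jFun y * gFun x + kFun y * hFun x := by linarith
    exact ⟨hpos.le, iff_of_false hpos.ne' hxy⟩
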